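/- Let (E,𝒞,r) be a semimatroid without loops. Then ∅ is the least element of ℒ(𝒞) and the characteristic polynomial satisfies χ(𝒞;t) = Σ_{X ∈ ℒ(𝒞)} μ(∅,X) · t^{r(𝒞)−r(X)}, where μ is the Möbius function of the poset ℒ(𝒞). -/

import Mathlib

/-- A semimatroid on a finite ground set `E`: a nonempty, subset-closed collection `C`
of "central" subsets of `E`, together with a rank function `r` satisfying (SR1)-(SR5). -/
structure Semimatroid (E : Type*) [DecidableEq E] [Fintype E] where
  C : Finset (Finset E)
  r : Finset E → ℕ
  C_nonempty : C.Nonempty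
  mem_of_subset : ∀ ⦃X Y : Finset E⦄, X ∈ C → Y ⊆ X → Y ∈ C
  r_le_card : ∀ ⦃X : Finset E⦄, X ∈ C → r X ≤ X.card
  r_mono : ∀ ⦃X Y : Finset E⦄, X ∈ C → Y ∈ C → X ⊆ Y → r X ≤ r Y
  submodular : ∀ ⦃X Y : Finset E⦄, X ∈ C → Y ∈ C → X ∪ Y ∈ C →
    r (X ∩ Y) + r (X ∪ Y) ≤ r X + r Y
  union_mem : ∀ ⦃X Y : Finset E⦄, X ∈ C → Y ∈ C → r X = r (X ∩ Y) → X ∪ Y ∈ C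
  augment : ∀ ⦃X Y : Finset E⦄, X ∈ C → Y ∈ C → r X < r Y →
    ∃ e ∈ Y \ X, insert e X ∈ C

namespace Semimatroid

variable {E : Type*} [DecidableEq E] [Fintype E] (S : Semimatroid E)

/-- The rank `r(𝒞)` of the semimatroid: the common rank of the maximal central sets. -/
def rank : ℕ := S.C.sup S.r

/-- The closure of a central set `X`:
`cl X = {e ∈ E : X ∪ {e} ∈ 𝒞 and r (X ∪ {e}) = r X}`. -/
def cl (X : Finset E) : Finset E :=
  Finset.univ.filter fun e => insert e X ∈ S.C ∧ S.r (insert e X) = S.r X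

/-- The flats of the semimatroid: central sets `X` with `cl X = X`. -/
def flats : Finset (Finset E) := S.C.filter fun X => S.cl X = X

/-- The characteristic polynomial `χ(𝒞;t) = Σ_{X ∈ 𝒞} (−1)^{|X|} t^{r(𝒞)−r(X)}`. -/
noncomputable def charPoly : Polynomial ℤ :=
  ∑ A ∈ S.C, (-1 : Polynomial ℤ) ^ A.card * Polynomial.X ^ (S.rank - S.r A)

end Semimatroid

/-!
Closure preserves rank, so grouping the central sets by their closure writes `χ(𝒞;t)` as
`∑ F, a F * t ^ (r(𝒞) - r F)` over the flats `F`, where `a F` is the sum of `(-1) ^ |A|` over the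
central sets `A` with `cl A = F`. The subsets of a flat `F` are precisely the central sets whose
closure is a flat contained in `F`; hence `∑ Z ⊆ F, a Z = ∑ A ⊆ F, (-1) ^ |A|`, which is `1` if
`F = ∅` and `0` otherwise. This is the recursion that determines `μ(∅, ·)`.
-/

theorem eq_of_sum_filter_le_eq {α M : Type*} [PartialOrder α] [DecidableLE α]
    [AddCommMonoid M] [IsRightCancelAdd M] {s : Finset α} {f g : α → M}
    (h : ∀ y ∈ s, ∑ z ∈ s with z ≤ y, f z = ∑ z ∈ s with z ≤ y, g z) {y : α} (hy : y ∈ s) :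
    f y = g y := by
  classical
  refine (s.finite_toSet.wellFoundedOn (r := (· < ·))).induction (P := fun y => f y = g y) hy
    fun y hy ih => ?_
  have hmem : y ∈ s.filter (· ≤ y) := Finset.mem_filter.2 ⟨hy, le_rfl⟩
  have hbelow : ∑ z ∈ (s.filter (· ≤ y)).erase y, f z =
      ∑ z ∈ (s.filter (· ≤ y)).erase y, g z :=
    Finset.sum_congr rfl fun z hz => by
      obtain ⟨hne, hz⟩ := Finset.mem_erase.1 hz
      obtain ⟨hzs, hle⟩ := Finset.mem_filter.1 hz
      exact ih z hzs (lt_of_le_of_ne hle hne)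
  have hsum := h y hy
  rw [← Finset.add_sum_erase _ _ hmem, ← Finset.add_sum_erase _ _ hmem, hbelow] at hsum
  exact add_right_cancel hsum

theorem sum_filter_le_and_le_eq_ite {α R : Type*} [PartialOrder α] [DecidableLE α] [DecidableEq α]
    [AddCommMonoidWithOne R] {s : Finset α} {x : α} {f : α → R} (hone : f x = 1)
    (hzero : ∀ y ∈ s, x ≤ y → x ≠ y → ∑ z ∈ s with x ≤ z ∧ z ≤ y, f z = 0)
    {y : α} (hy : y ∈ s) (hxy : x ≤ y) :
    ∑ z ∈ s with x ≤ z ∧ z ≤ y, f z = if y = x then 1 else 0 := by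
  split_ifs with h
  · subst h
    have hsingleton : s.filter (fun z => y ≤ z ∧ z ≤ y) = {y} := by
      ext z
      simp only [Finset.mem_filter, Finset.mem_singleton, ← le_antisymm_iff]
      exact ⟨fun hz => hz.2.symm, fun hz => ⟨hz ▸ hy, hz.symm⟩⟩
    rw [hsingleton, Finset.sum_singleton, hone]
  · exact hzero y hy hxy (Ne.symm h)

namespace Semimatroid

variable {E : Type*} [DecidableEq E] [Fintype E] (S : Semimatroid E) {A X Y F : Finset E} {e : E}

theorem mem_cl : e ∈ S.cl X ↔ insert e X ∈ S.C ∧ S.r (insert e X) = S.r X := by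
  simp [cl]

theorem mem_flats : X ∈ S.flats ↔ X ∈ S.C ∧ S.cl X = X := by
  simp [flats]

theorem empty_mem : ∅ ∈ S.C :=
  let ⟨X, hX⟩ := S.C_nonempty
  S.mem_of_subset hX X.empty_subset

theorem r_empty : S.r ∅ = 0 := by
  simpa using S.r_le_card S.empty_mem

theorem subset_cl (hX : X ∈ S.C) : X ⊆ S.cl X := fun e he => by
  simpa [mem_cl, Finset.insert_eq_of_mem he] using hX

theorem r_union_eq_right (hX : X ∈ S.C) (hY : Y ∈ S.C) (h : S.r X = S.r (X ∩ Y)) :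
    S.r (X ∪ Y) = S.r Y := by
  have hXY : X ∪ Y ∈ S.C := S.union_mem hX hY h
  have hle : S.r Y ≤ S.r (X ∪ Y) := S.r_mono hY hXY Finset.subset_union_right
  have hsub : S.r (X ∩ Y) + S.r (X ∪ Y) ≤ S.r X + S.r Y := S.submodular hX hY hXY
  lia

theorem cl_mono (hY : Y ∈ S.C) (hXY : X ⊆ Y) : S.cl X ⊆ S.cl Y := by
  intro e he
  obtain ⟨heX, hr⟩ := S.mem_cl.1 he
  have hinter : insert e X ∩ Y ∈ S.C := S.mem_of_subset hY Finset.inter_subset_right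
  have hinter_r : S.r (insert e X) = S.r (insert e X ∩ Y) :=
    le_antisymm
      (hr.trans_le <| S.r_mono (S.mem_of_subset hY hXY) hinter <|
        Finset.subset_inter (Finset.subset_insert e X) hXY)
      (S.r_mono hinter heX Finset.inter_subset_left)
  have hunion : insert e X ∪ Y = insert e Y := by
    rw [Finset.insert_union, Finset.union_eq_right.2 hXY]
  rw [mem_cl, ← hunion]
  exact ⟨S.union_mem heX hY hinter_r, S.r_union_eq_right heX hY hinter_r⟩

theorem union_mem_and_r_union_eq_of_subset_cl (hX : X ∈ S.C) (hY : Y ⊆ S.cl X) :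
    X ∪ Y ∈ S.C ∧ S.r (X ∪ Y) = S.r X := by
  induction Y using Finset.induction_on with
  | empty => simpa using hX
  | insert e Y _ ih =>
    obtain ⟨heX, hYX⟩ := Finset.insert_subset_iff.1 hY
    obtain ⟨hmem, hr⟩ := ih hYX
    obtain ⟨hmem', hr'⟩ := S.mem_cl.1 (S.cl_mono hmem Finset.subset_union_left heX)
    rw [Finset.union_insert]
    exact ⟨hmem', hr'.trans hr⟩

theorem cl_mem (hX : X ∈ S.C) : S.cl X ∈ S.C := by
  simpa only [Finset.union_eq_right.2 (S.subset_cl hX)] using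
    (S.union_mem_and_r_union_eq_of_subset_cl hX subset_rfl).1

theorem r_cl (hX : X ∈ S.C) : S.r (S.cl X) = S.r X := by
  simpa only [Finset.union_eq_right.2 (S.subset_cl hX)] using
    (S.union_mem_and_r_union_eq_of_subset_cl hX subset_rfl).2

theorem cl_cl (hX : X ∈ S.C) : S.cl (S.cl X) = S.cl X := by
  refine Finset.Subset.antisymm (fun e he => ?_) (S.subset_cl (S.cl_mem hX))
  obtain ⟨hcl, hr⟩ := S.mem_cl.1 he
  have hsub : insert e X ⊆ insert e (S.cl X) := Finset.insert_subset_insert e (S.subset_cl hX)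
  have hmem : insert e X ∈ S.C := S.mem_of_subset hcl hsub
  have hle : S.r (insert e X) ≤ S.r X :=
    calc S.r (insert e X) ≤ S.r (insert e (S.cl X)) := S.r_mono hmem hcl hsub
      _ = S.r (S.cl X) := hr
      _ = S.r X := S.r_cl hX
  exact S.mem_cl.2 ⟨hmem, hle.antisymm (S.r_mono hX hmem (Finset.subset_insert e X))⟩

theorem cl_mem_flats (hX : X ∈ S.C) : S.cl X ∈ S.flats :=
  S.mem_flats.2 ⟨S.cl_mem hX, S.cl_cl hX⟩

theorem cl_subset_iff (hA : A ∈ S.C) (hF : F ∈ S.flats) : S.cl A ⊆ F ↔ A ⊆ F := by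
  obtain ⟨hFC, hcl⟩ := S.mem_flats.1 hF
  exact ⟨(S.subset_cl hA).trans, fun hAF => (S.cl_mono hFC hAF).trans_eq hcl⟩

theorem empty_mem_flats (hloopless : ¬ ∃ e : E, {e} ∈ S.C ∧ S.r {e} = 0) : ∅ ∈ S.flats := by
  refine S.mem_flats.2 ⟨S.empty_mem, Finset.eq_empty_of_forall_notMem fun e he => hloopless ⟨e, ?_⟩⟩
  simpa [mem_cl, r_empty] using he

/-- The number of spanning sets `A` of the flat `F` (central sets with closure `F`), each counted
with sign `(-1) ^ |A|`. For a loopless semimatroid this is the Möbius value `μ(∅, F)`. -/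
def signedSpanningCount (F : Finset E) : ℤ := ∑ A ∈ S.C with S.cl A = F, (-1) ^ A.card

theorem charPoly_eq_sum_signedSpanningCount :
    S.charPoly = ∑ F ∈ S.flats,
      Polynomial.C (S.signedSpanningCount F) * Polynomial.X ^ (S.rank - S.r F) := by
  rw [charPoly, ← Finset.sum_fiberwise_of_maps_to (fun A hA => S.cl_mem_flats hA)]
  refine Finset.sum_congr rfl fun F _ => ?_
  rw [signedSpanningCount, map_sum, Finset.sum_mul]
  refine Finset.sum_congr rfl fun A hA => ?_
  obtain ⟨hAC, rfl⟩ := Finset.mem_filter.1 hA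
  simp [S.r_cl hAC]

theorem filter_cl_subset_eq_powerset (hF : F ∈ S.flats) :
    S.C.filter (fun A => S.cl A ⊆ F) = F.powerset := by
  ext A
  rw [Finset.mem_filter, Finset.mem_powerset]
  constructor
  · rintro ⟨hA, hAF⟩
    exact (S.cl_subset_iff hA hF).1 hAF
  · intro hAF
    have hA : A ∈ S.C := S.mem_of_subset (S.mem_flats.1 hF).1 hAF
    exact ⟨hA, (S.cl_subset_iff hA hF).2 hAF⟩

theorem sum_signedSpanningCount_filter_subset (hF : F ∈ S.flats) :
    ∑ Z ∈ S.flats with Z ⊆ F, S.signedSpanningCount Z = if F = ∅ then 1 else 0 := by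
  have hmaps : ∀ A ∈ S.C.filter (fun A => S.cl A ⊆ F),
      S.cl A ∈ S.flats.filter (fun Z => Z ⊆ F) := fun A hA => by
    obtain ⟨hAC, hAF⟩ := Finset.mem_filter.1 hA
    exact Finset.mem_filter.2 ⟨S.cl_mem_flats hAC, hAF⟩
  rw [← Finset.sum_powerset_neg_one_pow_card, ← S.filter_cl_subset_eq_powerset hF,
    ← Finset.sum_fiberwise_of_maps_to hmaps]
  refine Finset.sum_congr rfl fun Z hZ => Finset.sum_congr ?_ fun _ _ => rfl
  have hZF : Z ⊆ F := (Finset.mem_filter.1 hZ).2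
  rw [Finset.filter_filter]
  exact Finset.filter_congr fun A _ => ⟨fun h => ⟨h ▸ hZF, h⟩, And.right⟩

end Semimatroid

/-- For a loopless semimatroid `𝒞`, the empty set is the least flat and
`χ(𝒞;t) = Σ_{X ∈ ℒ(𝒞)} μ(∅,X) t^{r(𝒞)−r(X)}`, where `μ` is the Möbius function of `ℒ(𝒞)`. -/
theorem Semimatroid.charPoly_eq_sum_moebius
    {E : Type*} [DecidableEq E] [Fintype E] (S : Semimatroid E)
    (hloopless : ¬ ∃ e : E, {e} ∈ S.C ∧ S.r {e} = 0)
    (μ : Finset E → Finset E → ℤ)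
    (hμ_refl : ∀ Z ∈ S.flats, μ Z Z = 1)
    (hμ_rec : ∀ X ∈ S.flats, ∀ Y ∈ S.flats, X ⊆ Y → X ≠ Y →
      ∑ Z ∈ S.flats.filter (fun Z => X ⊆ Z ∧ Z ⊆ Y), μ X Z = 0) :
    (∅ ∈ S.flats ∧ ∀ X ∈ S.flats, ∅ ⊆ X) ∧
    S.charPoly =
      ∑ X ∈ S.flats, Polynomial.C (μ ∅ X) * Polynomial.X ^ (S.rank - S.r X) := by
  have hempty : ∅ ∈ S.flats := S.empty_mem_flats hloopless
  have hμ : ∀ F ∈ S.flats, ∑ Z ∈ S.flats with Z ⊆ F, μ ∅ Z = if F = ∅ then 1 else 0 := by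
    intro F hF
    simpa using sum_filter_le_and_le_eq_ite (hμ_refl ∅ hempty) (hμ_rec ∅ hempty) hF
      F.empty_subset
  have hcount : ∀ F ∈ S.flats, S.signedSpanningCount F = μ ∅ F := fun F hF =>
    eq_of_sum_filter_le_eq
      (fun Z hZ => (S.sum_signedSpanningCount_filter_subset hZ).trans (hμ Z hZ).symm) hF
  refine ⟨⟨hempty, fun X _ => Finset.empty_subset X⟩, ?_⟩
  rw [S.charPoly_eq_sum_signedSpanningCount]
  exact Finset.sum_congr rfl fun F hF => by rw [hcount F hF]
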